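/- arXiv:1008.2417 — 2 statements merged into one kernel-verified Lean document; each statement's English description precedes it below -/
import Mathlib

section
/- Let f : ℝ⁺ → ℝ⁺ be a standard operator monotone function (operator monotone with f(1) = 1 and x f(1/x) = f(x)). Then for all x > 0, 2x/(x+1) ≤ f(x) ≤ (1+x)/2. -/
/-!
An operator monotone function `f` on `(0, ∞)` is concave, and so is `x ↦ 1 / f (1 / x)`, which
equals `x / f x` under the symmetry. For a concave `g` with `g 1 = 1` and `x * g (1 / x) = g x`,
Jensen's inequality at the points `x` and `1 / x` with weights `1 / (1 + x)` and `x / (1 + x)`,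
whose mean is `1`, gives `g x ≤ (1 + x) / 2`. Taking `g = f` yields the upper bound, and taking
`g x = x / f x` yields the lower one.

Both concavity statements come from `2 × 2` matrices. Let `A` have eigenvalues `a`, `b`. If `t`
exceeds the top-left entry of `A`, then `A ≤ diag(t, m)` for `m` large, and comparing top-left
entries after applying `f` gives `concave_of_operatorMonotone`. If `1 / t` exceeds the top-left
entry of `A⁻¹`, then `diag(t, m) ≤ A` for `m` small, and testing on a multiple of `f(A)⁻¹ e₁` gives
`harmonic_of_operatorMonotone`. Both results require a strict inequality between the arguments; no
continuity of `f` is needed to remove it, because only the weights are perturbed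
(`bounds_of_lt_one`).
-/

open Matrix
open scoped ComplexOrder

/-- The function `f` applied to a Hermitian matrix via the spectral theorem. -/
noncomputable def hermApply {n : ℕ} (f : ℝ → ℝ) (A : Matrix (Fin n) (Fin n) ℂ)
    (hA : A.IsHermitian) : Matrix (Fin n) (Fin n) ℂ :=
  (hA.eigenvectorUnitary : Matrix (Fin n) (Fin n) ℂ) *
    Matrix.diagonal (fun i => ((f (hA.eigenvalues i) : ℝ) : ℂ)) *
    (star hA.eigenvectorUnitary : Matrix (Fin n) (Fin n) ℂ)

/-- `f : (0,∞) → (0,∞)` is operator monotone: for positive definite matrices of every size,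
`A ≤ B` (Loewner order) implies `f(A) ≤ f(B)`. -/
def OperatorMonotoneOn (f : ℝ → ℝ) : Prop :=
  ∀ (n : ℕ) (A B : Matrix (Fin n) (Fin n) ℂ) (hA : A.PosDef) (hB : B.PosDef),
    (B - A).PosSemidef →
      (hermApply f B hB.1 - hermApply f A hA.1).PosSemidef

/-- Functional calculus can be read off from any diagonalisation: if the columns of `W` are
eigenvectors of `A` with eigenvalues `d`, they are eigenvectors of `f(A)` with eigenvalues
`f ∘ d`. -/
lemma hermApply_mul_of_mul_eq {n : ℕ} (f : ℝ → ℝ) {A : Matrix (Fin n) (Fin n) ℂ}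
    (hA : A.IsHermitian) (W : Matrix (Fin n) (Fin n) ℂ) (d : Fin n → ℝ)
    (h : A * W = W * Matrix.diagonal (fun i => (d i : ℂ))) :
    hermApply f A hA * W = W * Matrix.diagonal (fun i => (f (d i) : ℂ)) := by
  set V : Matrix (Fin n) (Fin n) ℂ := (hA.eigenvectorUnitary : Matrix (Fin n) (Fin n) ℂ) with hV
  have hVV : V * star V = 1 := Unitary.coe_mul_star_self hA.eigenvectorUnitary
  have hVV' : star V * V = 1 := Unitary.coe_star_mul_self hA.eigenvectorUnitary
  have hspec : A = V * Matrix.diagonal (fun i => ((hA.eigenvalues i : ℝ) : ℂ)) * star V := by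
    have := hA.spectral_theorem
    rw [Unitary.conjStarAlgAut_apply] at this
    exact this
  have hX : Matrix.diagonal (fun i => ((hA.eigenvalues i : ℝ) : ℂ)) * (star V * W)
      = (star V * W) * Matrix.diagonal (fun i => (d i : ℂ)) := by
    calc _ = (star V * V) * Matrix.diagonal (fun i => ((hA.eigenvalues i : ℝ) : ℂ))
          * (star V * W) := by rw [hVV', one_mul]
      _ = star V * ((V * Matrix.diagonal (fun i => ((hA.eigenvalues i : ℝ) : ℂ)) * star V)
          * W) := by simp only [mul_assoc]
      _ = _ := by rw [← hspec, h, mul_assoc]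
  have hXf : Matrix.diagonal (fun i => ((f (hA.eigenvalues i) : ℝ) : ℂ)) * (star V * W)
      = (star V * W) * Matrix.diagonal (fun i => (f (d i) : ℂ)) := by
    ext i j
    have hij := congrFun (congrFun hX i) j
    rw [Matrix.diagonal_mul, Matrix.mul_diagonal] at hij ⊢
    -- a nonzero entry of `V* W` forces the two eigenvalues to agree
    by_cases h0 : (star V * W) i j = 0
    · simp [h0]
    · rw [mul_comm] at hij
      have : hA.eigenvalues i = d j := by exact_mod_cast mul_left_cancel₀ h0 hij
      rw [this, mul_comm]
  calc hermApply f A hA * W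
      = V * (Matrix.diagonal (fun i => ((f (hA.eigenvalues i) : ℝ) : ℂ)) * (star V * W)) := by
        simp only [hermApply, hV, mul_assoc]
    _ = (V * star V) * W * Matrix.diagonal (fun i => (f (d i) : ℂ)) := by
        rw [hXf]; simp only [mul_assoc]
    _ = _ := by rw [hVV, one_mul]

/-- The real symmetric matrix with rows `(p, q)` and `(q, r)`, with complex entries. -/
noncomputable def symMat (p q r : ℝ) : Matrix (Fin 2) (Fin 2) ℂ := !![(p : ℂ), q; q, r]

lemma symMat_isHermitian (p q r : ℝ) : (symMat p q r).IsHermitian := by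
  ext i j
  fin_cases i <;> fin_cases j <;> simp [symMat]

lemma symMat_posSemidef {p q r : ℝ} (hp : 0 < p) (h : q ^ 2 ≤ p * r) :
    (symMat p q r).PosSemidef := by
  have hd : (Matrix.diagonal ![(p : ℂ), ((r - q ^ 2 / p : ℝ) : ℂ)]).PosSemidef := by
    apply Matrix.PosSemidef.diagonal
    have : q ^ 2 / p ≤ r := by rw [div_le_iff₀ hp]; linarith
    intro i
    fin_cases i
    · simpa using hp.le
    · change (0 : ℂ) ≤ ((r - q ^ 2 / p : ℝ) : ℂ)
      exact_mod_cast sub_nonneg.2 this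
  -- the `L D Lᴴ` decomposition
  have := hd.conjTranspose_mul_mul_same !![(1 : ℂ), ((q / p : ℝ) : ℂ); 0, 1]
  convert this using 1
  have hp' : (p : ℂ) ≠ 0 := by exact_mod_cast hp.ne'
  ext i j
  fin_cases i <;> fin_cases j <;>
    simp [symMat, Matrix.mul_apply, Fin.sum_univ_two] <;> field_simp
  ring

/-- The real quadratic form of a positive semidefinite `symMat` is nonnegative. -/
lemma symMat_form_nonneg {p q r : ℝ} (h : (symMat p q r).PosSemidef) (x y : ℝ) :
    0 ≤ p * x ^ 2 + 2 * q * x * y + r * y ^ 2 := by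
  have := h.dotProduct_mulVec_nonneg ![(x : ℂ), (y : ℂ)]
  have e : star ![(x : ℂ), (y : ℂ)] ⬝ᵥ (symMat p q r *ᵥ ![(x : ℂ), (y : ℂ)])
      = ((p * x ^ 2 + 2 * q * x * y + r * y ^ 2 : ℝ) : ℂ) := by
    simp [symMat, dotProduct, Matrix.mulVec, Fin.sum_univ_two]
    ring
  rw [e] at this
  exact_mod_cast this

/-- The symmetric matrix with eigenvalues `a`, `b` and eigenvectors `(c, s)`, `(s, -c)`
(for `c ^ 2 + s ^ 2 = 1`). -/
noncomputable def rotMat (c s a b : ℝ) : Matrix (Fin 2) (Fin 2) ℂ :=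
  symMat (c ^ 2 * a + s ^ 2 * b) (c * s * (a - b)) (s ^ 2 * a + c ^ 2 * b)

lemma symMat_reflection_sq {c s : ℝ} (h : c ^ 2 + s ^ 2 = 1) :
    symMat c s (-c) * symMat c s (-c) = 1 := by
  have h' : (c : ℂ) ^ 2 + (s : ℂ) ^ 2 = 1 := by exact_mod_cast h
  ext i j
  fin_cases i <;> fin_cases j <;> simp [symMat, Matrix.mul_apply, Fin.sum_univ_two] <;>
    first | linear_combination h' | ring

lemma rotMat_eq (c s a b : ℝ) :
    rotMat c s a b = symMat c s (-c) * Matrix.diagonal (fun i => ((![a, b] i : ℝ) : ℂ))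
      * symMat c s (-c) := by
  ext i j
  fin_cases i <;> fin_cases j <;>
    simp [rotMat, symMat, Matrix.mul_apply, Fin.sum_univ_two, Matrix.vecMul_diagonal] <;> ring

lemma rotMat_posDef {c s a b : ℝ} (h : c ^ 2 + s ^ 2 = 1) (ha : 0 < a) (hb : 0 < b) :
    (rotMat c s a b).PosDef := by
  have hd : (Matrix.diagonal (fun i => ((![a, b] i : ℝ) : ℂ))).PosDef := by
    apply Matrix.PosDef.diagonal
    intro i
    fin_cases i <;> simpa
  have hU : IsUnit (symMat c s (-c)) := .of_mul_eq_one _ (symMat_reflection_sq h)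
  have := hd.conjTranspose_mul_mul_same (Matrix.mulVec_injective_of_isUnit hU)
  rwa [(symMat_isHermitian c s (-c)).eq, ← rotMat_eq] at this

lemma hermApply_rotMat (f : ℝ → ℝ) {c s a b : ℝ} (h : c ^ 2 + s ^ 2 = 1)
    (hA : (rotMat c s a b).IsHermitian) :
    hermApply f (rotMat c s a b) hA = rotMat c s (f a) (f b) := by
  have hR := symMat_reflection_sq h
  have := hermApply_mul_of_mul_eq f hA (symMat c s (-c)) ![a, b]
    (by rw [rotMat_eq, mul_assoc, hR, mul_one])
  have e : (fun i => ((f (![a, b] i) : ℝ) : ℂ)) = fun i => ((![f a, f b] i : ℝ) : ℂ) := by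
    ext i; fin_cases i <;> rfl
  rw [rotMat_eq c s (f a), ← e, ← this, mul_assoc, hR, mul_one]

lemma rotMat_sub (c s a b c' s' a' b' : ℝ) :
    rotMat c s a b - rotMat c' s' a' b' =
      symMat (c ^ 2 * a + s ^ 2 * b - (c' ^ 2 * a' + s' ^ 2 * b'))
        (c * s * (a - b) - c' * s' * (a' - b'))
        (s ^ 2 * a + c ^ 2 * b - (s' ^ 2 * a' + c' ^ 2 * b')) := by
  ext i j
  fin_cases i <;> fin_cases j <;> simp [rotMat, symMat]

/-- Operator monotone functions satisfy Jensen's inequality when the mean of the arguments is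
strictly below `t`. The matrix with eigenvalues `a`, `b` is dominated by `diag(t, m)` for large
`m`; the top-left entries of the images under `f` are then compared. -/
lemma concave_of_operatorMonotone {f : ℝ → ℝ} (hmono : OperatorMonotoneOn f) {c s a b t : ℝ}
    (h : c ^ 2 + s ^ 2 = 1) (ha : 0 < a) (hb : 0 < b) (ht : c ^ 2 * a + s ^ 2 * b < t) :
    c ^ 2 * f a + s ^ 2 * f b ≤ f t := by
  have h10 : (1 : ℝ) ^ 2 + 0 ^ 2 = 1 := by norm_num
  set p := t - (c ^ 2 * a + s ^ 2 * b) with hp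
  set q := c * s * (a - b) with hq
  have hp0 : 0 < p := sub_pos.2 ht
  have ht0 : 0 < t := lt_of_le_of_lt (by positivity) ht
  have hR : 0 < s ^ 2 * a + c ^ 2 * b := by
    rcases eq_or_ne c 0 with rfl | hc
    · have : s ^ 2 = 1 := by linarith
      rw [this]; linarith
    · positivity
  -- `m` makes the determinant of the difference vanish
  set m := s ^ 2 * a + c ^ 2 * b + q ^ 2 / p with hm
  have hm0 : 0 < m := by positivity
  have hA := rotMat_posDef h ha hb
  have hB := rotMat_posDef h10 ht0 hm0
  have key := hmono 2 _ _ hA hB (by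
    rw [rotMat_sub]
    apply symMat_posSemidef
    · linarith
    · apply le_of_eq
      have : p * (q ^ 2 / p) = q ^ 2 := by field_simp
      linear_combination (-1 : ℝ) * this)
  rw [hermApply_rotMat f h, hermApply_rotMat f h10, rotMat_sub] at key
  have := symMat_form_nonneg key 1 0
  linarith

/-- The analogue of `concave_of_operatorMonotone` for the operator monotone function
`x ↦ 1 / f (1 / x)`, with denominators cleared. Now `diag(t, m)` with small `m` is dominated by
the matrix `A` with eigenvalues `a`, `b`, and the images under `f` are tested on a multiple of
`f(A)⁻¹ e₁`. -/
lemma harmonic_of_operatorMonotone {f : ℝ → ℝ} (hfpos : ∀ x > 0, 0 < f x)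
    (hmono : OperatorMonotoneOn f) {c s a b t : ℝ}
    (h : c ^ 2 + s ^ 2 = 1) (ha : 0 < a) (hb : 0 < b) (ht0 : 0 < t)
    (ht : t * (s ^ 2 * a + c ^ 2 * b) < a * b) :
    f t * (c ^ 2 * f b + s ^ 2 * f a) ≤ f a * f b := by
  have h10 : (1 : ℝ) ^ 2 + 0 ^ 2 = 1 := by norm_num
  have conv_pos : ∀ u v : ℝ, 0 < u → 0 < v → 0 < s ^ 2 * u + c ^ 2 * v := by
    intro u v hu hv
    rcases eq_or_ne c 0 with rfl | hc
    · have : s ^ 2 = 1 := by linarith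
      rw [this]; linarith
    · positivity
  have hR := conv_pos a b ha hb
  set R := s ^ 2 * a + c ^ 2 * b with hRdef
  set p := c ^ 2 * a + s ^ 2 * b - t with hp
  set q := c * s * (a - b) with hq
  -- the determinant of `A - diag(t, 0)`
  have hdet : p * R - q ^ 2 = a * b - t * R := by
    have : (c ^ 2 * a + s ^ 2 * b) * R - q ^ 2 = a * b * (c ^ 2 + s ^ 2) ^ 2 := by
      rw [hRdef, hq]; ring
    rw [h] at this
    rw [hp]; linear_combination this
  have hp0 : 0 < p := by
    have : 0 < p * R := by nlinarith [sq_nonneg q]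
    exact pos_of_mul_pos_left this hR.le
  set m := R - q ^ 2 / p with hm
  have hm0 : 0 < m := by
    rw [hm, sub_pos, div_lt_iff₀ hp0]; linarith
  have hA := rotMat_posDef h ha hb
  have hB := rotMat_posDef h10 ht0 hm0
  have key := hmono 2 _ _ hB hA (by
    rw [rotMat_sub]
    apply symMat_posSemidef
    · linarith
    · apply le_of_eq
      have : p * (q ^ 2 / p) = q ^ 2 := by field_simp
      linear_combination (-1 : ℝ) * this)
  rw [hermApply_rotMat f h, hermApply_rotMat f h10, rotMat_sub] at key
  have hfa := hfpos a ha
  have hfb := hfpos b hb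
  have hv : 0 < c ^ 2 * f b + s ^ 2 * f a := by linarith [conv_pos (f a) (f b) hfa hfb]
  -- `(v, w) = f a * f b • f(A)⁻¹ e₁`
  set v := c ^ 2 * f b + s ^ 2 * f a with hvdef
  set w := c * s * (f b - f a) with hw
  have hform := symMat_form_nonneg key v w
  have hfA : (c ^ 2 * f a + s ^ 2 * f b) * v ^ 2 + 2 * (c * s * (f a - f b)) * v * w
      + (s ^ 2 * f a + c ^ 2 * f b) * w ^ 2 = f a * f b * v := by
    have : (c ^ 2 * f a + s ^ 2 * f b) * v ^ 2 + 2 * (c * s * (f a - f b)) * v * w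
      + (s ^ 2 * f a + c ^ 2 * f b) * w ^ 2 = f a * f b * v * (c ^ 2 + s ^ 2) ^ 2 := by
      rw [hvdef, hw]; ring
    rw [this, h]; ring
  have hmw : 0 ≤ f m * w ^ 2 := mul_nonneg (hfpos m hm0).le (sq_nonneg w)
  have : f t * v * v ≤ f a * f b * v := by nlinarith
  exact le_of_mul_le_mul_right this hv

/-- Both bounds for `x < 1`. The two concavity lemmas are applied to the points `x`, `1 / x`, with
weights chosen so that their mean falls just below `1`. -/
lemma bounds_of_lt_one {f : ℝ → ℝ} (hfpos : ∀ x > 0, 0 < f x)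
    (hmono : OperatorMonotoneOn f) (hf1 : f 1 = 1)
    (hsymm : ∀ x > (0 : ℝ), x * f (1 / x) = f x) {x : ℝ} (hx : 0 < x) (hx1 : x < 1) :
    2 * x / (x + 1) ≤ f x ∧ f x ≤ (1 + x) / 2 := by
  have hF := hfpos x hx
  have hinv : f (1 / x) = f x / x := by rw [← hsymm x hx]; field_simp
  have core : ∀ z, x < z → z < 2 * x / (x + 1) → f x * z ≤ x ∧ z ≤ f x := by
    intro z hz hz2
    rw [lt_div_iff₀ (by linarith)] at hz2
    have h1x : 0 < 1 - x := by linarith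
    have hz1 : z < 1 := by nlinarith
    set l := (1 - z) / (1 - x) with hl
    have hlz : l * (1 - x) = 1 - z := by rw [hl]; field_simp
    have hl0 : 0 ≤ l := div_nonneg (by linarith) h1x.le
    have hl1 : 0 ≤ 1 - l := by
      rw [hl, sub_nonneg, div_le_one h1x]; linarith
    have sq1 := Real.sq_sqrt hl0
    have sq2 := Real.sq_sqrt hl1
    have hlt : l * x + (1 - l) * (1 / x) < 1 := by
      have e : l * x + (1 - l) * (1 / x) = (l * x ^ 2 + (1 - l)) / x := by field_simp
      rw [e, div_lt_one hx]
      -- `1 - l (1 - x²) = 1 - (1 - z) (1 + x)`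
      have : l * x ^ 2 + (1 - l) = 1 - (1 - z) * (1 + x) := by rw [← hlz]; ring
      rw [this]; nlinarith
    constructor
    · have := concave_of_operatorMonotone hmono (c := √l) (s := √(1 - l)) (a := x) (b := 1 / x)
        (t := 1) (by rw [sq1, sq2]; ring) hx (by positivity) (by rw [sq1, sq2]; exact hlt)
      rw [sq1, sq2, hf1, hinv] at this
      have e : l * f x + (1 - l) * (f x / x) = f x * z / x := by
        have : z = 1 - l * (1 - x) := by linarith
        rw [this]; field_simp; ring
      rw [e, div_le_one hx] at this
      exact this
    · have := harmonic_of_operatorMonotone hfpos hmono (c := √(1 - l)) (s := √l) (a := x)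
        (b := 1 / x) (t := 1) (by rw [sq1, sq2]; ring) hx (by positivity) one_pos (by
          rw [sq1, sq2, mul_one_div_cancel hx.ne', one_mul]; exact hlt)
      rw [sq1, sq2, hf1, hinv] at this
      have e : 1 * ((1 - l) * (f x / x) + l * f x) = f x / x * z := by
        have : z = 1 - l * (1 - x) := by linarith
        rw [this]; field_simp; ring
      rw [e, show f x * (f x / x) = f x / x * f x by ring] at this
      exact le_of_mul_le_mul_left this (by positivity)
  have hxz : x < 2 * x / (x + 1) := by
    rw [lt_div_iff₀ (by linarith)]; nlinarith
  constructor
  · by_contra! hlt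
    obtain ⟨z, hz1, hz2⟩ := exists_between (max_lt hxz hlt)
    have := (core z (lt_of_le_of_lt (le_max_left _ _) hz1) hz2).2
    exact absurd (lt_of_le_of_lt (le_max_right _ _) hz1) (not_lt.2 this)
  · have : 2 * x / (x + 1) ≤ x / f x := by
      by_contra! hlt
      obtain ⟨z, hz1, hz2⟩ := exists_between (max_lt hxz hlt)
      have h1 := (core z (lt_of_le_of_lt (le_max_left _ _) hz1) hz2).1
      have h2 := lt_of_le_of_lt (le_max_right _ _) hz1
      rw [div_lt_iff₀ hF] at h2
      linarith
    rw [div_le_div_iff₀ (by linarith) hF] at this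
    have : x * (2 * f x) ≤ x * (x + 1) := by linarith
    have := le_of_mul_le_mul_left this hx
    linarith

/-- a standard operator monotone function (operator monotone, `f(1) = 1`,
`x f(1/x) = f(x)`) lies between the harmonic and arithmetic means:
`2x/(x+1) ≤ f(x) ≤ (1+x)/2` for all `x > 0`. -/
theorem stmt3 (f : ℝ → ℝ) (hfpos : ∀ x > 0, 0 < f x)
    (hmono : OperatorMonotoneOn f) (hf1 : f 1 = 1)
    (hsymm : ∀ x > (0 : ℝ), x * f (1 / x) = f x) :
    ∀ x > (0 : ℝ), 2 * x / (x + 1) ≤ f x ∧ f x ≤ (1 + x) / 2 := by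
  intro x hx
  rcases lt_trichotomy x 1 with hx1 | rfl | hx1
  · exact bounds_of_lt_one hfpos hmono hf1 hsymm hx hx1
  · rw [hf1]; norm_num
  · -- the symmetry carries the bounds at `1 / x` to bounds at `x`
    have hy : 0 < 1 / x := by positivity
    obtain ⟨h1, h2⟩ := bounds_of_lt_one hfpos hmono hf1 hsymm hy
      (by rw [div_lt_one hx]; exact hx1)
    rw [← hsymm x hx]
    constructor
    · have e : 2 * x / (x + 1) = x * (2 * (1 / x) / (1 / x + 1)) := by
        field_simp
        ring
      rw [e]
      exact mul_le_mul_of_nonneg_left h1 hx.le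
    · have e : (1 + x) / 2 = x * ((1 + 1 / x) / 2) := by
        field_simp
        ring
      rw [e]
      exact mul_le_mul_of_nonneg_left h2 hx.le
end

section
/- Let f : ℝ⁺ → ℝ⁺ be operator monotone and β : M_n → M_m a completely positive trace-preserving map with β(D) positive definite for a positive definite D. Then β J_D^f β* ≤ J_{β(D)}^f as operators on M_m, and equivalently β* (J_{β(D)}^f)⁻¹ β ≤ (J_D^f)⁻¹ as operators on M_n. -/
/-!
For positive definite `D`, `J_D^f = R_D σ L_D`, where `p σ q = q f(p / q)` (here for commuting
operators) is the operator mean of `f`. The first inequality follows from two facts.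

* `β R_D β* ≤ R_{β(D)}` and `β L_D β* ≤ L_{β(D)}` (`schwarz_right`, `schwarz_left`). These are the
  Schwarz inequality for the unital completely positive map `β*`, paired with `D`; they come from
  applying `β` blockwise to the positive matrix `(G, 1) D (G, 1)*`.
* The transformer inequality `T* (p σ q) T ≤ r σ s` whenever `T* p T ≤ r` and `T* q T ≤ s`
  (`diagonal_transformer`), used with `T = β*` in eigenbases of `D` and `β(D)`, where all four
  multiplication operators are diagonal.

With `K = q^{1/2} T s^{-1/2}` the transformer inequality becomes Hansen's inequality
`K* f(a) K ≤ f(b)` for a contraction `K` with `K* a K ≤ b`. To prove it, `K` is extended to an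
isometry `V`, and the operator with a large eigenvalue off the range of `V` and equal to `t b` on
it (`t > 1`) dominates `a ⊕ δ`; operator monotonicity applied to this pair gives
`K* f(a) K ≤ f(t² b)` (`isometry_jensen`, `contraction_jensen`). The `1 × 1` case of this gives
`f(t x) ≤ t³ f(x)` (`f_mul_le`), so the dilation factor disappears as `t → 1`, with no continuity
or integral representation of `f` needed.

The inequality for the inverses follows from the first one by expanding
`⟨Y - β* A, J_D (Y - β* A)⟩ ≥ 0` at `Y = J_D⁻¹ X` and `A = J_{β(D)}⁻¹ β X`.
-/

open Matrix
open scoped ComplexOrder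

/-- The map `J_D^f = f(L_D R_D⁻¹) R_D` for a positive definite `D`, written in the
eigenbasis of `D`:  `J_D^f B = U (m_f(λᵢ,λⱼ) (U* B U)_{ij})_{ij} U*` with
`m_f(λᵢ,λⱼ) = λⱼ f(λᵢ/λⱼ)`. -/
noncomputable def Jmap {n : ℕ} (f : ℝ → ℝ) (D : Matrix (Fin n) (Fin n) ℂ)
    (hD : D.IsHermitian) (B : Matrix (Fin n) (Fin n) ℂ) : Matrix (Fin n) (Fin n) ℂ :=
  let U : Matrix (Fin n) (Fin n) ℂ := hD.eigenvectorUnitary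
  U * (Matrix.of fun i j =>
      ((hD.eigenvalues j * f (hD.eigenvalues i / hD.eigenvalues j) : ℝ) : ℂ) *
        (star U * B * U) i j) * star U

/-- `β : M_n → M_m` is completely positive. -/
def IsCompletelyPositive {n m : ℕ}
    (β : Matrix (Fin n) (Fin n) ℂ →ₗ[ℂ] Matrix (Fin m) (Fin m) ℂ) : Prop :=
  ∀ (k : ℕ) (X : Matrix (Fin k × Fin n) (Fin k × Fin n) ℂ), X.PosSemidef →
    (Matrix.of fun p q : Fin k × Fin m =>
      β (Matrix.of fun i j => X (p.1, i) (q.1, j)) p.2 q.2).PosSemidef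

/-! ### Hansen's inequality -/

/-- If `Y W = W diag(y)`, then `f(Y) W = W diag(f y)`. -/
lemma hermApply_mul_of_intertwine {N : ℕ} {J : Type*} [Fintype J] [DecidableEq J] (f : ℝ → ℝ)
    (Y : Matrix (Fin N) (Fin N) ℂ) (hY : Y.IsHermitian) (W : Matrix (Fin N) J ℂ) (y : J → ℝ)
    (h : Y * W = W * diagonal (fun j => (y j : ℂ))) :
    hermApply f Y hY * W = W * diagonal (fun j => (f (y j) : ℂ)) := by
  set U : Matrix (Fin N) (Fin N) ℂ := hY.eigenvectorUnitary.1 with hU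
  have hUU : star U * U = 1 := Unitary.coe_star_mul_self _
  have hUU' : U * star U = 1 := Unitary.coe_mul_star_self _
  have hs : Y = U * diagonal (fun i => (hY.eigenvalues i : ℂ)) * star U := by
    have := hY.spectral_theorem
    rw [Unitary.conjStarAlgAut_apply] at this
    exact this
  have h1 : diagonal (fun i => (hY.eigenvalues i : ℂ)) * (star U * W)
      = (star U * W) * diagonal (fun j => (y j : ℂ)) := by
    have h5 : star U * Y = diagonal (fun i => (hY.eigenvalues i : ℂ)) * star U := by
      conv_lhs => rw [hs]
      simp only [← Matrix.mul_assoc, hUU, Matrix.one_mul]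
    rw [Matrix.mul_assoc, ← h, ← Matrix.mul_assoc, ← Matrix.mul_assoc, h5]
  have h2 : diagonal (fun i => (f (hY.eigenvalues i) : ℂ)) * (star U * W)
      = (star U * W) * diagonal (fun j => (f (y j) : ℂ)) := by
    ext i j
    have h3 := congrFun (congrFun h1 i) j
    rw [diagonal_mul, mul_diagonal] at h3 ⊢
    by_cases hz : (star U * W) i j = 0
    · simp [hz]
    · rw [mul_comm] at h3
      have := mul_left_cancel₀ hz h3
      rw [Complex.ofReal_inj] at this
      rw [this, mul_comm]
  have h4 : hermApply f Y hY = U * diagonal (fun i => (f (hY.eigenvalues i) : ℂ)) * star U := rfl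
  rw [h4, Matrix.mul_assoc, Matrix.mul_assoc, h2]
  simp only [← Matrix.mul_assoc, hUU', Matrix.one_mul]

/-- The case `S = Fin N` of `isometry_jensen`. -/
lemma isometry_jensen_fin {f : ℝ → ℝ} (hmono : OperatorMonotoneOn f) {N : ℕ} {J : Type*} [Fintype J]
    [DecidableEq J] (V : Matrix (Fin N) J ℂ) (hV : Vᴴ * V = 1) (c : Fin N → ℝ) (hc : ∀ i, 0 < c i)
    (b : J → ℝ)
    (h : (diagonal (fun j => (b j : ℂ)) - Vᴴ * diagonal (fun i => (c i : ℂ)) * V).PosSemidef)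
    (t : ℝ) (ht : 1 < t) :
    (diagonal (fun j => (f (t * b j) : ℂ))
      - Vᴴ * diagonal (fun i => (f (c i) : ℂ)) * V).PosSemidef := by
  obtain ⟨η, hη, rfl⟩ : ∃ η : ℝ, 0 < η ∧ t = 1 + η := ⟨t - 1, by linarith, by ring⟩
  obtain ⟨M, hM⟩ : ∃ M : ℝ, ∀ i, c i ≤ M := by
    obtain ⟨M, hM⟩ := (Set.finite_range c).bddAbove
    exact ⟨M, fun i => hM ⟨i, rfl⟩⟩
  set X : Matrix (Fin N) (Fin N) ℂ := diagonal (fun i => (c i : ℂ)) with hX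
  have hXp : X.PosDef := posDef_diagonal_iff.2 fun i => by exact_mod_cast hc i
  set P : Matrix (Fin N) (Fin N) ℂ := V * Vᴴ with hP
  have hPh : Pᴴ = P := by simp [hP]
  have hPP : P * P = P := by
    rw [hP, Matrix.mul_assoc, ← Matrix.mul_assoc Vᴴ, hV, Matrix.one_mul]
  have hPV : P * V = V := by rw [hP, Matrix.mul_assoc, hV, Matrix.mul_one]
  -- `L` bounds `(1 + 1/η) X`, so that it absorbs the off-diagonal corners of `X`.
  set L : ℝ := (1 + η⁻¹) * M with hL
  set Y : Matrix (Fin N) (Fin N) ℂ :=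
    V * diagonal (fun j => (((1 + η) * b j : ℝ) : ℂ)) * Vᴴ + (L : ℂ) • (1 - P) with hYdef
  have hYV : Y * V = V * diagonal (fun j => (((1 + η) * b j : ℝ) : ℂ)) := by
    rw [hYdef, Matrix.add_mul, Matrix.mul_assoc _ Vᴴ V, hV, Matrix.mul_one, Matrix.smul_mul,
      Matrix.sub_mul, hPV, Matrix.one_mul, sub_self, smul_zero, add_zero]
  have hLX : ((L : ℂ) • (1 : Matrix (Fin N) (Fin N) ℂ) - ((1 + η⁻¹ : ℝ) : ℂ) • X).PosSemidef := by
    have : ((L : ℂ) • (1 : Matrix (Fin N) (Fin N) ℂ) - ((1 + η⁻¹ : ℝ) : ℂ) • X)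
        = diagonal (fun i => ((L - (1 + η⁻¹) * c i : ℝ) : ℂ)) := by
      ext i j
      by_cases hij : i = j
      · subst hij; simp [hX]
      · simp [hX, hij]
    rw [this, posSemidef_diagonal_iff]
    intro i
    have : (1 + η⁻¹) * c i ≤ L := mul_le_mul_of_nonneg_left (hM i) (by positivity)
    exact_mod_cast sub_nonneg.2 this
  have hdec : Y - X =
      ((1 + η : ℝ) : ℂ) • (V * (diagonal (fun j => (b j : ℂ)) - Vᴴ * X * V) * Vᴴ)
      + (1 - P) * ((L : ℂ) • (1 : Matrix (Fin N) (Fin N) ℂ) - ((1 + η⁻¹ : ℝ) : ℂ) • X) * (1 - P)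
      + ((η⁻¹ : ℝ) : ℂ) • (((η : ℂ) • P - (1 - P)) * X * ((η : ℂ) • P - (1 - P))) := by
    have e1 : V * (diagonal (fun j => (b j : ℂ)) - Vᴴ * X * V) * Vᴴ
        = V * diagonal (fun j => (b j : ℂ)) * Vᴴ - P * X * P := by
      rw [hP]; simp only [Matrix.mul_sub, Matrix.sub_mul, Matrix.mul_assoc]
    have e2 : V * diagonal (fun j => (((1 + η) * b j : ℝ) : ℂ)) * Vᴴ
        = ((1 + η : ℝ) : ℂ) • (V * diagonal (fun j => (b j : ℂ)) * Vᴴ) := by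
      rw [← Matrix.smul_mul, ← Matrix.mul_smul, ← diagonal_smul]
      congr 3
      ext j; simp
    rw [e1, hYdef, e2]
    have hη' : (η : ℂ) ≠ 0 := by exact_mod_cast hη.ne'
    simp only [Matrix.sub_mul, Matrix.mul_sub, Matrix.smul_mul, Matrix.mul_smul, Matrix.one_mul,
      Matrix.mul_one, smul_sub, smul_smul, hPP]
    push_cast
    match_scalars <;> field_simp <;> ring
  have hYX : (Y - X).PosSemidef := by
    rw [hdec]
    have hη0 : (0 : ℂ) ≤ ((1 + η : ℝ) : ℂ) := by exact_mod_cast (by positivity : (0:ℝ) ≤ 1 + η)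
    have hη1 : (0 : ℂ) ≤ ((η⁻¹ : ℝ) : ℂ) := by exact_mod_cast (by positivity : (0:ℝ) ≤ η⁻¹)
    refine ((PosSemidef.smul (h.mul_mul_conjTranspose_same V) hη0).add ?_).add
      (PosSemidef.smul ?_ hη1)
    · have := hLX.conjTranspose_mul_mul_same (1 - P)
      rwa [conjTranspose_sub, conjTranspose_one, hPh] at this
    · have := hXp.posSemidef.conjTranspose_mul_mul_same ((η : ℂ) • P - (1 - P))
      simpa [hPh] using this
  have hYp : Y.PosDef := by
    have := hXp.add_posSemidef hYX
    rwa [add_sub_cancel] at this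
  have key := (hmono N X Y hXp hYp hYX).conjTranspose_mul_mul_same V
  have hfX : hermApply f X hXp.1 = diagonal (fun i => (f (c i) : ℂ)) := by
    have := hermApply_mul_of_intertwine f X hXp.1 1 c (by simp [hX])
    simpa using this
  rw [Matrix.mul_sub, Matrix.sub_mul, Matrix.mul_assoc Vᴴ (hermApply f Y _),
    hermApply_mul_of_intertwine f Y hYp.1 V _ hYV, ← Matrix.mul_assoc, hV, Matrix.one_mul, hfX]
    at key
  exact key

/-- Up to a dilation of the argument by `t > 1`, an operator monotone `f` satisfies
`V* f(c) V ≤ f(b)` whenever `V` is an isometry with `V* c V ≤ b`. The factor `t` leaves room for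
an extension of `t b` from the range of `V` to an operator dominating `c` on the whole space. -/
lemma isometry_jensen {f : ℝ → ℝ} (hmono : OperatorMonotoneOn f) {S J : Type*} [Fintype S]
    [DecidableEq S] [Fintype J]
    [DecidableEq J] (V : Matrix S J ℂ) (hV : Vᴴ * V = 1) (c : S → ℝ) (hc : ∀ i, 0 < c i)
    (b : J → ℝ)
    (h : (diagonal (fun j => (b j : ℂ)) - Vᴴ * diagonal (fun i => (c i : ℂ)) * V).PosSemidef)
    (t : ℝ) (ht : 1 < t) :
    (diagonal (fun j => (f (t * b j) : ℂ))
      - Vᴴ * diagonal (fun i => (f (c i) : ℂ)) * V).PosSemidef := by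
  let e : Fin (Fintype.card S) ≃ S := (Fintype.equivFin S).symm
  have hd (g : S → ℝ) : (V.submatrix e id)ᴴ * diagonal (fun i => (g (e i) : ℂ)) * V.submatrix e id
      = Vᴴ * diagonal (fun i => (g i : ℂ)) * V := by
    have : diagonal (fun i => (g (e i) : ℂ)) = (diagonal (fun i => (g i : ℂ))).submatrix e e :=
      (submatrix_diagonal_equiv (fun i => (g i : ℂ)) e).symm
    rw [this, conjTranspose_submatrix, submatrix_mul_equiv, submatrix_mul_equiv, submatrix_id_id]
  have := isometry_jensen_fin hmono (V.submatrix e id)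
    (by rw [conjTranspose_submatrix, submatrix_mul_equiv, hV, submatrix_id_id])
    (fun i => c (e i)) (fun i => hc _) b (by rw [hd]; exact h) t ht
  rwa [hd fun i => f (c i)] at this

open scoped MatrixOrder in
lemma exists_eq_conjTranspose_mul_self {J : Type*} [Fintype J] [DecidableEq J] {A : Matrix J J ℂ}
    (hA : A.PosSemidef) : ∃ C : Matrix J J ℂ, A = Cᴴ * C :=
  CStarAlgebra.nonneg_iff_eq_star_mul_self.mp hA.nonneg

/-- The passage from isometries to contractions: `K` is the upper corner of the isometry
`(K, (1 - K* K)^{1/2})`, and the lower corner, weighted by a small `δ > 0`, costs no more than a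
further dilation factor `t`. -/
lemma contraction_jensen {f : ℝ → ℝ} (hfpos : ∀ x > 0, 0 < f x) (hmono : OperatorMonotoneOn f)
    {I J : Type*} [Fintype I] [DecidableEq I] [Fintype J] [DecidableEq J] (K : Matrix I J ℂ)
    (hK : (1 - Kᴴ * K).PosSemidef) (a : I → ℝ) (ha : ∀ i, 0 < a i)
    (b : J → ℝ) (hb : ∀ j, 0 < b j)
    (h : (diagonal (fun j => (b j : ℂ)) - Kᴴ * diagonal (fun i => (a i : ℂ)) * K).PosSemidef)
    (t : ℝ) (ht : 1 < t) :
    (diagonal (fun j => (f (t * (t * b j)) : ℂ))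
      - Kᴴ * diagonal (fun i => (f (a i) : ℂ)) * K).PosSemidef := by
  obtain ⟨C, hC⟩ := exists_eq_conjTranspose_mul_self hK
  obtain ⟨δ, hδ, hδb⟩ : ∃ δ : ℝ, 0 < δ ∧ ∀ j, δ ≤ (t - 1) * b j := by
    have ht' : 0 < t - 1 := by linarith
    rcases isEmpty_or_nonempty J with hJ | hJ
    · exact ⟨1, one_pos, fun j => isEmptyElim j⟩
    · obtain ⟨j₀, hj₀⟩ := Finite.exists_min b
      exact ⟨(t - 1) * b j₀, mul_pos ht' (hb _), fun j => mul_le_mul_of_nonneg_left (hj₀ j) ht'.le⟩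
  have hV : (fromRows K C)ᴴ * fromRows K C = 1 := by
    rw [conjTranspose_fromRows_eq_fromCols_conjTranspose, fromCols_mul_fromRows, ← hC]
    abel
  have hd (u : I → ℝ) (v : ℝ) :
      (fromRows K C)ᴴ * diagonal (fun s => ((Sum.elim u (fun _ : J => v) s : ℝ) : ℂ)) * fromRows K C
        = Kᴴ * diagonal (fun i => (u i : ℂ)) * K + (v : ℂ) • (1 - Kᴴ * K) := by
    have h1 : diagonal (fun s => ((Sum.elim u (fun _ : J => v) s : ℝ) : ℂ)) * fromRows K C
        = fromRows (diagonal (fun i => (u i : ℂ)) * K) ((v : ℂ) • C) := by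
      ext (i | i) j <;> simp [diagonal_mul]
    rw [Matrix.mul_assoc, h1, conjTranspose_fromRows_eq_fromCols_conjTranspose,
      fromCols_mul_fromRows, hC, Matrix.mul_smul, Matrix.mul_assoc]
  have key := isometry_jensen hmono (fromRows K C) hV (Sum.elim a fun _ => δ)
    (by rintro (i | i); exacts [ha i, hδ]) (fun j => t * b j) (by
      rw [hd]
      have hdiag : (diagonal (fun j => (((t - 1) * b j - δ : ℝ) : ℂ))).PosSemidef :=
        posSemidef_diagonal_iff.2 fun j => by exact_mod_cast sub_nonneg.2 (hδb j)
      have hKK : ((δ : ℂ) • (Kᴴ * K)).PosSemidef :=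
        PosSemidef.smul (posSemidef_conjTranspose_mul_self K) (by exact_mod_cast hδ.le)
      convert (h.add hdiag).add hKK using 1
      have e : diagonal (fun j => ((t * b j : ℝ) : ℂ)) = diagonal (fun j => (b j : ℂ))
          + diagonal (fun j => (((t - 1) * b j - δ : ℝ) : ℂ)) + (δ : ℂ) • (1 : Matrix J J ℂ) := by
        ext i j
        by_cases hij : i = j
        · subst hij; simp; ring
        · simp [hij]
      rw [e, smul_sub]
      abel) t ht
  have h2 : (fun s : I ⊕ J => ((f (Sum.elim a (fun _ : J => δ) s) : ℝ) : ℂ))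
      = fun s => ((Sum.elim (fun i => f (a i)) (fun _ : J => f δ) s : ℝ) : ℂ) := by
    ext (s | s) <;> rfl
  rw [h2, hd] at key
  have h3 : ((f δ : ℂ) • (1 - Kᴴ * K)).PosSemidef :=
    PosSemidef.smul hK (by exact_mod_cast (hfpos δ hδ).le)
  convert key.add h3 using 1
  abel

/-- The scalar case of `contraction_jensen`, up to the power of `t`: `f x / x` is
nonincreasing. -/
lemma f_mul_le {f : ℝ → ℝ} (hfpos : ∀ x > 0, 0 < f x) (hmono : OperatorMonotoneOn f)
    (t : ℝ) (ht : 1 < t) (x : ℝ) (hx : 0 < x) : f (t * x) ≤ t ^ 3 * f x := by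
  have ht0 : 0 < t := by linarith
  -- The `1 × 1` contraction `k = t ^ (-3/2)` satisfies `k² (t x) ≤ x / t²`.
  set k : ℝ := √((t ^ 3)⁻¹) with hk
  have hkk : k * k = (t ^ 3)⁻¹ := Real.mul_self_sqrt (by positivity)
  set K : Matrix Unit Unit ℂ := diagonal (fun _ => (k : ℂ)) with hKd
  have hK (a b : ℝ) (hab : (t ^ 3)⁻¹ * a ≤ b) :
      (diagonal (fun _ : Unit => (b : ℂ)) - Kᴴ * diagonal (fun _ => (a : ℂ)) * K).PosSemidef := by
    have : diagonal (fun _ : Unit => (b : ℂ)) - Kᴴ * diagonal (fun _ => (a : ℂ)) * K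
        = diagonal (fun _ => ((b - (t ^ 3)⁻¹ * a : ℝ) : ℂ)) := by
      rw [← hkk]
      ext i j
      simp [hKd]
      ring
    rw [this, posSemidef_diagonal_iff]
    intro _
    exact_mod_cast sub_nonneg.2 hab
  have h1 : (1 - Kᴴ * K).PosSemidef := by
    have := hK 1 1 (by rw [mul_one]; exact inv_le_one_of_one_le₀ (one_le_pow₀ ht.le))
    simpa using this
  have key := contraction_jensen hfpos hmono K h1 (fun _ => t * x) (fun _ => by positivity)
    (fun _ => x / t ^ 2) (fun _ => by positivity) (hK _ _ (by apply le_of_eq; field_simp)) t ht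
  have h2 : t * (t * (x / t ^ 2)) = x := by field_simp
  simp only [h2] at key
  have := key.diag_nonneg (i := ())
  simp [hKd] at this
  have h3 : k * f (t * x) * k ≤ f x := by exact_mod_cast this
  have h4 : (t ^ 3)⁻¹ * f (t * x) ≤ f x := by rw [← hkk]; linarith
  rwa [inv_mul_le_iff₀ (by positivity)] at h4

/-! ### The transformer inequality -/

lemma dotProduct_diagonal_mulVec {S : Type*} [Fintype S] [DecidableEq S] (c : S → ℝ) (x : S → ℂ) :
    star x ⬝ᵥ (diagonal (fun i => (c i : ℂ)) *ᵥ x)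
      = ((∑ i, c i * Complex.normSq (x i) : ℝ) : ℂ) := by
  simp only [dotProduct, mulVec_diagonal, Pi.star_apply, Complex.ofReal_sum, Complex.ofReal_mul,
    Complex.normSq_eq_conj_mul_self, RCLike.star_def]
  exact Finset.sum_congr rfl fun i _ => by ring

lemma conjTranspose_diagonal_ofReal {S : Type*} [DecidableEq S] (c : S → ℝ) :
    (diagonal (fun i => (c i : ℂ)) : Matrix S S ℂ)ᴴ = diagonal (fun i => (c i : ℂ)) := by
  rw [diagonal_conjTranspose]
  congr 1
  ext i
  simp

lemma posSemidef_diagonal_sub_iff {I J : Type*} [Fintype I] [DecidableEq I] [Fintype J]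
    [DecidableEq J] (M : Matrix I J ℂ) (p : I → ℝ) (r : J → ℝ) :
    (diagonal (fun j => (r j : ℂ)) - Mᴴ * diagonal (fun i => (p i : ℂ)) * M).PosSemidef ↔
      ∀ x : J → ℂ, ∑ i, p i * Complex.normSq ((M *ᵥ x) i) ≤ ∑ j, r j * Complex.normSq (x j) := by
  have hform2 (x : J → ℂ) : star x ⬝ᵥ ((diagonal (fun j => (r j : ℂ))
      - Mᴴ * diagonal (fun i => (p i : ℂ)) * M) *ᵥ x)
      = ((∑ j, r j * Complex.normSq (x j) - ∑ i, p i * Complex.normSq ((M *ᵥ x) i) : ℝ) : ℂ) := by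
    have h1 : star x ⬝ᵥ ((Mᴴ * diagonal (fun i => (p i : ℂ)) * M) *ᵥ x)
        = star (M *ᵥ x) ⬝ᵥ (diagonal (fun i => (p i : ℂ)) *ᵥ (M *ᵥ x)) := by
      rw [star_mulVec, ← mulVec_mulVec, ← mulVec_mulVec, ← dotProduct_mulVec]
    rw [sub_mulVec, dotProduct_sub, h1, Complex.ofReal_sub, ← dotProduct_diagonal_mulVec, ← dotProduct_diagonal_mulVec]
  rw [posSemidef_iff_dotProduct_mulVec]
  constructor
  · rintro ⟨-, h⟩ x
    have := h x
    rw [hform2] at this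
    exact sub_nonneg.1 (by exact_mod_cast this)
  · intro h
    refine ⟨?_, fun x => ?_⟩
    · rw [IsHermitian, conjTranspose_sub, conjTranspose_mul, conjTranspose_mul, conjTranspose_diagonal_ofReal,
        conjTranspose_diagonal_ofReal,
        conjTranspose_conjTranspose, Matrix.mul_assoc]
    · rw [hform2]
      exact_mod_cast sub_nonneg.2 (h x)

/-- The transformer inequality `T* (p σ q) T ≤ (T* p T) σ (T* q T) ≤ r σ s` for the operator mean
`p σ q = q f(p / q)`, in the case where `p, q` and `r, s` are diagonal. -/
lemma diagonal_transformer {f : ℝ → ℝ} (hfpos : ∀ x > 0, 0 < f x) (hmono : OperatorMonotoneOn f)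
    {I J : Type*} [Fintype I] [DecidableEq I] [Fintype J] [DecidableEq J]
    (T : (J → ℂ) →ₗ[ℂ] (I → ℂ)) (p q : I → ℝ) (r s : J → ℝ)
    (hp : ∀ i, 0 < p i) (hq : ∀ i, 0 < q i) (hr : ∀ j, 0 < r j) (hs : ∀ j, 0 < s j)
    (hpr : ∀ x, ∑ i, p i * Complex.normSq (T x i) ≤ ∑ j, r j * Complex.normSq (x j))
    (hqs : ∀ x, ∑ i, q i * Complex.normSq (T x i) ≤ ∑ j, s j * Complex.normSq (x j))
    (x : J → ℂ) :
    ∑ i, q i * f (p i / q i) * Complex.normSq (T x i)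
      ≤ ∑ j, s j * f (r j / s j) * Complex.normSq (x j) := by
  -- `K = q^{1/2} T s^{-1/2}`
  set Kl : (J → ℂ) →ₗ[ℂ] (I → ℂ) :=
    (toLin' (diagonal (fun i => ((√(q i) : ℝ) : ℂ)))) ∘ₗ T ∘ₗ
      (toLin' (diagonal (fun j => (((√(s j))⁻¹ : ℝ) : ℂ)))) with hKl
  set K := LinearMap.toMatrix' Kl with hKdef
  have hKx (x : J → ℂ) (i : I) : Complex.normSq ((K *ᵥ x) i)
      = q i * Complex.normSq (T (fun j => (((√(s j))⁻¹ : ℝ) : ℂ) * x j) i) := by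
    have e : K *ᵥ x = Kl x := LinearMap.toMatrix'_mulVec _ _
    have e2 : diagonal (fun j => (((√(s j))⁻¹ : ℝ) : ℂ)) *ᵥ x
        = fun j => (((√(s j))⁻¹ : ℝ) : ℂ) * x j := by
      ext j; rw [mulVec_diagonal]
    rw [e, hKl, LinearMap.comp_apply, LinearMap.comp_apply, toLin'_apply, toLin'_apply,
      mulVec_diagonal, e2, Complex.normSq_mul, Complex.normSq_ofReal, Real.mul_self_sqrt (hq i).le]
  have hns (x : J → ℂ) (j : J) : Complex.normSq ((((√(s j))⁻¹ : ℝ) : ℂ) * x j)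
      = (s j)⁻¹ * Complex.normSq (x j) := by
    rw [Complex.normSq_mul, Complex.normSq_ofReal, ← mul_inv, Real.mul_self_sqrt (hs j).le]
  have hK : (1 - Kᴴ * K).PosSemidef := by
    have := (posSemidef_diagonal_sub_iff K (fun _ => 1) (fun _ => 1)).2 fun x => by
      simp only [hKx, one_mul]
      refine (hqs _).trans (le_of_eq (Finset.sum_congr rfl fun j _ => ?_))
      rw [hns, mul_inv_cancel_left₀ (hs j).ne']
    simpa using this
  have hKab := (posSemidef_diagonal_sub_iff K (fun i => p i / q i) (fun j => r j / s j)).2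
    fun x => by
      simp only [hKx]
      refine (le_of_eq (Finset.sum_congr rfl fun i _ => ?_)).trans
        ((hpr (fun j => (((√(s j))⁻¹ : ℝ) : ℂ) * x j)).trans
          (le_of_eq (Finset.sum_congr rfl fun j _ => ?_)))
      · rw [← mul_assoc, div_mul_cancel₀ _ (hq i).ne']
      · rw [hns, ← mul_assoc, div_eq_mul_inv]
  have hb (j : J) : 0 < r j / s j := div_pos (hr j) (hs j)
  set z : J → ℂ := fun j => ((√(s j) : ℝ) : ℂ) * x j with hz
  have hzx : (fun j => (((√(s j))⁻¹ : ℝ) : ℂ) * z j) = x := by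
    ext j
    have : ((√(s j) : ℝ) : ℂ) ≠ 0 := by exact_mod_cast (Real.sqrt_pos.2 (hs j)).ne'
    simp [hz, this]
  have hzn (j : J) : Complex.normSq (z j) = s j * Complex.normSq (x j) := by
    rw [hz, Complex.normSq_mul, Complex.normSq_ofReal, Real.mul_self_sqrt (hs j).le]
  have main (t : ℝ) (ht : 1 < t) : ∑ i, q i * f (p i / q i) * Complex.normSq (T x i)
      ≤ t ^ 6 * ∑ j, s j * f (r j / s j) * Complex.normSq (x j) := by
    have ht0 : 0 < t := by linarith
    have h1 := (posSemidef_diagonal_sub_iff K _ _).1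
      (contraction_jensen hfpos hmono K hK (fun i => p i / q i) (fun i => div_pos (hp i) (hq i))
        (fun j => r j / s j) hb hKab t ht) z
    simp only [hKx, hzx, hzn] at h1
    calc ∑ i, q i * f (p i / q i) * Complex.normSq (T x i)
        = ∑ i, f (p i / q i) * (q i * Complex.normSq (T x i)) :=
          Finset.sum_congr rfl fun i _ => by ring
      _ ≤ _ := h1
      _ ≤ ∑ j, t ^ 6 * (s j * f (r j / s j) * Complex.normSq (x j)) := by
          refine Finset.sum_le_sum fun j _ => ?_
          have h2 : f (t * (t * (r j / s j))) ≤ t ^ 6 * f (r j / s j) :=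
            calc f (t * (t * (r j / s j))) ≤ t ^ 3 * f (t * (r j / s j)) :=
                  f_mul_le hfpos hmono t ht _ (mul_pos ht0 (hb j))
              _ ≤ t ^ 3 * (t ^ 3 * f (r j / s j)) :=
                  mul_le_mul_of_nonneg_left (f_mul_le hfpos hmono t ht _ (hb j)) (by positivity)
              _ = t ^ 6 * f (r j / s j) := by ring
          calc _ ≤ t ^ 6 * f (r j / s j) * (s j * Complex.normSq (x j)) :=
                mul_le_mul_of_nonneg_right h2 (mul_nonneg (hs j).le (Complex.normSq_nonneg _))
            _ = _ := by ring
      _ = _ := (Finset.mul_sum _ _ _).symm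
  have hlim : Filter.Tendsto (fun t : ℝ => t ^ 6 * ∑ j, s j * f (r j / s j) * Complex.normSq (x j))
      (nhdsWithin 1 (Set.Ioi 1))
      (nhds (1 ^ 6 * ∑ j, s j * f (r j / s j) * Complex.normSq (x j))) :=
    (Continuous.tendsto (by fun_prop) 1).mono_left nhdsWithin_le_nhds
  have := ge_of_tendsto hlim (Filter.eventually_of_mem self_mem_nhdsWithin fun t ht => main t ht)
  simpa using this

/-! ### Schwarz inequalities -/

/-- Pairing the positive matrix obtained by applying `β` blockwise to `(G, 1) D (G, 1)*` with the
column `(1, -H)`. -/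
lemma schwarz_aux {n m : ℕ} (β : Matrix (Fin n) (Fin n) ℂ →ₗ[ℂ] Matrix (Fin m) (Fin m) ℂ)
    (hcp : IsCompletelyPositive β) (D : Matrix (Fin n) (Fin n) ℂ) (hD : D.PosSemidef)
    (G : Matrix (Fin n) (Fin n) ℂ) (H : Matrix (Fin m) (Fin m) ℂ) :
    0 ≤ (β (G * D * Gᴴ) - β (G * D) * H - Hᴴ * β (D * Gᴴ) + Hᴴ * β D * H).trace ∧
      β (D * Gᴴ) = (β (G * D))ᴴ := by
  let V : Matrix (Fin 2 × Fin n) (Fin n) ℂ := of fun p j => (![G, 1] p.1) p.2 j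
  let Z : Matrix (Fin 2 × Fin m) (Fin m) ℂ := of fun p j => (![1, -H] p.1) p.2 j
  have hblk (a b : Fin 2) : (of fun i j => (V * D * Vᴴ) (a, i) (b, j))
      = ![G, 1] a * D * (![G, 1] b)ᴴ := by
    ext i j
    simp [V, Matrix.mul_apply]
  have hM := hcp 2 (V * D * Vᴴ) (hD.mul_mul_conjTranspose_same V)
  simp only [hblk] at hM
  constructor
  · have h := (hM.conjTranspose_mul_mul_same Z).trace_nonneg
    have e : Zᴴ * (of fun p q : Fin 2 × Fin m =>
        β (![G, 1] p.1 * D * (![G, 1] q.1)ᴴ) p.2 q.2) * Z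
        = ∑ a : Fin 2, ∑ b : Fin 2, (![1, -H] a)ᴴ * β (![G, 1] a * D * (![G, 1] b)ᴴ)
          * ![1, -H] b := by
      ext i j
      rw [Finset.sum_comm]
      simp only [Matrix.mul_apply, Fintype.sum_prod_type, Matrix.sum_apply, Z, conjTranspose_apply,
        of_apply, Finset.sum_mul]
      refine Finset.sum_congr rfl fun b _ => ?_
      rw [Finset.sum_comm]
    rw [e] at h
    have e2 : ∑ a : Fin 2, ∑ b : Fin 2, (![1, -H] a)ᴴ * β (![G, 1] a * D * (![G, 1] b)ᴴ)
          * ![1, -H] b = β (G * D * Gᴴ) - β (G * D) * H - Hᴴ * β (D * Gᴴ) + Hᴴ * β D * H := by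
      simp [Fin.sum_univ_two]
      abel
    rwa [e2] at h
  · ext i j
    have := congrFun (congrFun hM.1 (1, i)) (0, j)
    simp [conjTranspose_apply] at this
    simp [conjTranspose_apply, this]

/-- The Schwarz inequality `β*(A)* β*(A) ≤ β*(A* A)` paired with `D`: `β R_D β* ≤ R_{β(D)}`. -/
lemma schwarz_right {n m : ℕ} (β : Matrix (Fin n) (Fin n) ℂ →ₗ[ℂ] Matrix (Fin m) (Fin m) ℂ)
    (hcp : IsCompletelyPositive β) (htp : ∀ X, (β X).trace = X.trace)
    (D : Matrix (Fin n) (Fin n) ℂ) (hD : D.PosSemidef)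
    (A : Matrix (Fin m) (Fin m) ℂ) (B : Matrix (Fin n) (Fin n) ℂ)
    (hB : ∀ X, (Aᴴ * β X).trace = (Bᴴ * X).trace) :
    (Bᴴ * (B * D)).trace.re ≤ (Aᴴ * (A * β D)).trace.re := by
  obtain ⟨h, h2⟩ := schwarz_aux β hcp D hD B Aᴴ
  have e1 : (β (B * D * Bᴴ)).trace = (Bᴴ * (B * D)).trace := by rw [htp, trace_mul_comm]
  have e2 : (β (B * D) * Aᴴ).trace = (Bᴴ * (B * D)).trace := by rw [trace_mul_comm, hB]
  have e3 : (Aᴴᴴ * β (D * Bᴴ)).trace = star (Bᴴ * (B * D)).trace := by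
    rw [← e2, ← trace_conjTranspose, conjTranspose_mul, h2]
  have e4 : (Aᴴᴴ * β D * Aᴴ).trace = (Aᴴ * (A * β D)).trace := by
    rw [trace_mul_comm, conjTranspose_conjTranspose]
  rw [trace_add, trace_sub, trace_sub, e1, e2, e3, e4] at h
  have := (Complex.le_def.1 h).1
  simp at this
  exact this

/-- The Schwarz inequality `β*(A) β*(A)* ≤ β*(A A*)` paired with `D`: `β L_D β* ≤ L_{β(D)}`. -/
lemma schwarz_left {n m : ℕ} (β : Matrix (Fin n) (Fin n) ℂ →ₗ[ℂ] Matrix (Fin m) (Fin m) ℂ)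
    (hcp : IsCompletelyPositive β) (htp : ∀ X, (β X).trace = X.trace)
    (D : Matrix (Fin n) (Fin n) ℂ) (hD : D.PosSemidef)
    (A : Matrix (Fin m) (Fin m) ℂ) (B : Matrix (Fin n) (Fin n) ℂ)
    (hB : ∀ X, (Aᴴ * β X).trace = (Bᴴ * X).trace) :
    (Bᴴ * (D * B)).trace.re ≤ (Aᴴ * (β D * A)).trace.re := by
  obtain ⟨h, h2⟩ := schwarz_aux β hcp D hD Bᴴ A
  rw [conjTranspose_conjTranspose] at h h2
  have e1 : (β (Bᴴ * D * B)).trace = (Bᴴ * (D * B)).trace := by rw [htp, Matrix.mul_assoc]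
  have e3 : (Aᴴ * β (D * B)).trace = (Bᴴ * (D * B)).trace := hB _
  have e2 : (β (Bᴴ * D) * A).trace = star (Bᴴ * (D * B)).trace := by
    rw [← e3, ← trace_conjTranspose, conjTranspose_mul, h2, conjTranspose_conjTranspose,
      conjTranspose_conjTranspose]
  rw [trace_add, trace_sub, trace_sub, e1, e2, e3, Matrix.mul_assoc] at h
  have := (Complex.le_def.1 h).1
  simp at this
  exact this

/-! ### Coordinates in an eigenbasis -/

/-- The entries of `B` in an eigenbasis of the Hermitian matrix `D`. -/
noncomputable def eigenCoord {n : ℕ} {D : Matrix (Fin n) (Fin n) ℂ} (hD : D.IsHermitian)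
    (B : Matrix (Fin n) (Fin n) ℂ) (p : Fin n × Fin n) : ℂ :=
  (star hD.eigenvectorUnitary.1 * B * hD.eigenvectorUnitary.1) p.1 p.2

section eigenCoord

variable {n : ℕ} {D : Matrix (Fin n) (Fin n) ℂ} (hD : D.IsHermitian)

lemma trace_eq_sum_eigenCoord (Y Z : Matrix (Fin n) (Fin n) ℂ) :
    (Yᴴ * Z).trace = ∑ p, star (eigenCoord hD Y p) * eigenCoord hD Z p := by
  set U : Matrix (Fin n) (Fin n) ℂ := hD.eigenvectorUnitary.1 with hU
  have hUU' : U * star U = 1 := Unitary.coe_mul_star_self _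
  have h1 : (Yᴴ * Z).trace = ((star U * Y * U)ᴴ * (star U * Z * U)).trace := by
    have : (star U * Y * U)ᴴ * (star U * Z * U) = star U * (Yᴴ * Z * U) := by
      rw [conjTranspose_mul, conjTranspose_mul, star_eq_conjTranspose, conjTranspose_conjTranspose,
        ← star_eq_conjTranspose]
      calc star U * (Yᴴ * U) * (star U * Z * U) = star U * (Yᴴ * (U * star U) * Z * U) := by
            simp only [Matrix.mul_assoc]
        _ = _ := by rw [hUU', Matrix.mul_one]
    rw [this, trace_mul_comm (star U), Matrix.mul_assoc, hUU', Matrix.mul_one]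
  rw [h1, Fintype.sum_prod_type, Finset.sum_comm]
  simp only [Matrix.trace, diag_apply, Matrix.mul_apply (M := (star U * Y * U)ᴴ),
    conjTranspose_apply]
  rfl

lemma eigenCoord_Jmap (f : ℝ → ℝ) (B : Matrix (Fin n) (Fin n) ℂ) (p : Fin n × Fin n) :
    eigenCoord hD (Jmap f D hD B) p =
      ((hD.eigenvalues p.2 * f (hD.eigenvalues p.1 / hD.eigenvalues p.2) : ℝ) : ℂ)
        * eigenCoord hD B p := by
  unfold eigenCoord Jmap
  set U : Matrix (Fin n) (Fin n) ℂ := hD.eigenvectorUnitary.1 with hU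
  have hUU : star U * U = 1 := Unitary.coe_star_mul_self _
  dsimp only
  rw [← Matrix.mul_assoc, ← Matrix.mul_assoc, hUU, Matrix.one_mul, Matrix.mul_assoc, hUU,
    Matrix.mul_one, of_apply]

lemma eq_conj_diagonal : D = hD.eigenvectorUnitary.1 *
    diagonal (fun i => (hD.eigenvalues i : ℂ)) * star hD.eigenvectorUnitary.1 := by
  have := hD.spectral_theorem
  rw [Unitary.conjStarAlgAut_apply] at this
  exact this

lemma eigenCoord_mul_left (B : Matrix (Fin n) (Fin n) ℂ) (p : Fin n × Fin n) :
    eigenCoord hD (D * B) p = (hD.eigenvalues p.1 : ℂ) * eigenCoord hD B p := by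
  have hs := eq_conj_diagonal hD
  unfold eigenCoord
  set U : Matrix (Fin n) (Fin n) ℂ := hD.eigenvectorUnitary.1 with hU
  have hUU : star U * U = 1 := Unitary.coe_star_mul_self _
  have : star U * D = diagonal (fun i => (hD.eigenvalues i : ℂ)) * star U := by
    conv_lhs => rw [hs]
    simp only [← Matrix.mul_assoc, hUU, Matrix.one_mul]
  rw [← Matrix.mul_assoc, this, Matrix.mul_assoc, Matrix.mul_assoc, diagonal_mul,
    ← Matrix.mul_assoc]

lemma eigenCoord_mul_right (B : Matrix (Fin n) (Fin n) ℂ) (p : Fin n × Fin n) :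
    eigenCoord hD (B * D) p = (hD.eigenvalues p.2 : ℂ) * eigenCoord hD B p := by
  have hs := eq_conj_diagonal hD
  unfold eigenCoord
  set U : Matrix (Fin n) (Fin n) ℂ := hD.eigenvectorUnitary.1 with hU
  have hUU : star U * U = 1 := Unitary.coe_star_mul_self _
  have : D * U = U * diagonal (fun i => (hD.eigenvalues i : ℂ)) := by
    conv_lhs => rw [hs]
    simp only [Matrix.mul_assoc, hUU, Matrix.mul_one]
  rw [← Matrix.mul_assoc, Matrix.mul_assoc, this, ← Matrix.mul_assoc, mul_diagonal, mul_comm]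

/-- The quadratic form of an operator that is diagonal in the eigenbasis of `D`. -/
lemma trace_eq_of_eigenCoord (Y Z : Matrix (Fin n) (Fin n) ℂ) (c : Fin n × Fin n → ℝ)
    (h : ∀ p, eigenCoord hD Z p = (c p : ℂ) * eigenCoord hD Y p) :
    (Yᴴ * Z).trace = ((∑ p, c p * Complex.normSq (eigenCoord hD Y p) : ℝ) : ℂ) := by
  rw [trace_eq_sum_eigenCoord hD]
  simp only [h, Complex.ofReal_sum, Complex.ofReal_mul, Complex.normSq_eq_conj_mul_self,
    RCLike.star_def]
  exact Finset.sum_congr rfl fun i _ => by ring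

lemma trace_Jmap (f : ℝ → ℝ) (Y : Matrix (Fin n) (Fin n) ℂ) :
    (Yᴴ * Jmap f D hD Y).trace = ((∑ p : Fin n × Fin n,
      hD.eigenvalues p.2 * f (hD.eigenvalues p.1 / hD.eigenvalues p.2)
        * Complex.normSq (eigenCoord hD Y p) : ℝ) : ℂ) :=
  trace_eq_of_eigenCoord hD _ _ _ (eigenCoord_Jmap hD f Y)

lemma trace_Jmap_conj (f : ℝ → ℝ) (Y Z : Matrix (Fin n) (Fin n) ℂ) :
    (Yᴴ * Jmap f D hD Z).trace = star (Zᴴ * Jmap f D hD Y).trace := by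
  rw [trace_eq_sum_eigenCoord hD, trace_eq_sum_eigenCoord hD, star_sum]
  refine Finset.sum_congr rfl fun p _ => ?_
  rw [eigenCoord_Jmap, eigenCoord_Jmap]
  simp
  ring

lemma Jmap_sub (f : ℝ → ℝ) (Y Z : Matrix (Fin n) (Fin n) ℂ) :
    Jmap f D hD (Y - Z) = Jmap f D hD Y - Jmap f D hD Z := by
  unfold Jmap
  dsimp only
  rw [← Matrix.sub_mul, ← Matrix.mul_sub]
  congr 2
  ext i j
  simp only [of_apply, Matrix.sub_apply, Matrix.sub_mul, mul_sub]

end eigenCoord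

/-- `eigenCoord` inverted: the matrix with entries `x` in an eigenbasis of `D`, as a linear map. -/
noncomputable def ofEigenCoord {n : ℕ} {D : Matrix (Fin n) (Fin n) ℂ} (hD : D.IsHermitian) :
    (Fin n × Fin n → ℂ) →ₗ[ℂ] Matrix (Fin n) (Fin n) ℂ where
  toFun x := hD.eigenvectorUnitary.1 * (of fun i j => x (i, j)) * star hD.eigenvectorUnitary.1
  map_add' x y := by
    rw [← Matrix.add_mul, ← Matrix.mul_add]
    rfl
  map_smul' c x := by
    rw [RingHom.id_apply, ← Matrix.smul_mul, ← Matrix.mul_smul]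
    rfl

lemma eigenCoord_ofEigenCoord {n : ℕ} {D : Matrix (Fin n) (Fin n) ℂ} (hD : D.IsHermitian)
    (x : Fin n × Fin n → ℂ) : eigenCoord hD (ofEigenCoord hD x) = x := by
  ext p
  unfold eigenCoord ofEigenCoord
  set U : Matrix (Fin n) (Fin n) ℂ := hD.eigenvectorUnitary.1 with hU
  have hUU : star U * U = 1 := Unitary.coe_star_mul_self _
  dsimp only [LinearMap.coe_mk, AddHom.coe_mk]
  rw [← Matrix.mul_assoc, ← Matrix.mul_assoc, hUU, Matrix.one_mul, Matrix.mul_assoc, hUU,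
    Matrix.mul_one, of_apply]

lemma ofEigenCoord_eigenCoord {n : ℕ} {D : Matrix (Fin n) (Fin n) ℂ} (hD : D.IsHermitian)
    (B : Matrix (Fin n) (Fin n) ℂ) : ofEigenCoord hD (eigenCoord hD B) = B := by
  unfold ofEigenCoord
  dsimp only [LinearMap.coe_mk, AddHom.coe_mk]
  set U : Matrix (Fin n) (Fin n) ℂ := hD.eigenvectorUnitary.1 with hU
  have hUU' : U * star U = 1 := Unitary.coe_mul_star_self _
  have : (of fun i j => eigenCoord hD B (i, j)) = star U * B * U := rfl
  rw [this, ← Matrix.mul_assoc, ← Matrix.mul_assoc, hUU', Matrix.one_mul, Matrix.mul_assoc, hUU',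
    Matrix.mul_one]

/-- `eigenCoord` as a linear map. -/
noncomputable def eigenCoordLin {n : ℕ} {D : Matrix (Fin n) (Fin n) ℂ} (hD : D.IsHermitian) :
    Matrix (Fin n) (Fin n) ℂ →ₗ[ℂ] (Fin n × Fin n → ℂ) where
  toFun := eigenCoord hD
  map_add' x y := by
    ext p
    simp only [eigenCoord, Matrix.mul_add, Matrix.add_mul, Matrix.add_apply, Pi.add_apply]
  map_smul' c x := by
    ext p
    simp only [eigenCoord, Matrix.mul_smul, Matrix.smul_mul, Matrix.smul_apply, Pi.smul_apply,
      RingHom.id_apply]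

/-! ### The two operator inequalities -/

/-- `β J_D^f β* ≤ J_{β(D)}^f`: since `J_D^f = R_D σ L_D` for the operator mean of `f`, this is the
transformer inequality for `β*`, with the two Schwarz inequalities as input. -/
lemma Jmap_le {n m : ℕ} (f : ℝ → ℝ) (hfpos : ∀ x > 0, 0 < f x)
    (hmono : OperatorMonotoneOn f)
    (β : Matrix (Fin n) (Fin n) ℂ →ₗ[ℂ] Matrix (Fin m) (Fin m) ℂ)
    (hcp : IsCompletelyPositive β) (htp : ∀ X, (β X).trace = X.trace)
    (βs : Matrix (Fin m) (Fin m) ℂ →ₗ[ℂ] Matrix (Fin n) (Fin n) ℂ)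
    (hβs : ∀ (A : Matrix (Fin m) (Fin m) ℂ) (X : Matrix (Fin n) (Fin n) ℂ),
      (Aᴴ * β X).trace = ((βs A)ᴴ * X).trace)
    (D : Matrix (Fin n) (Fin n) ℂ) (hD : D.PosDef) (hβD : (β D).PosDef)
    (A : Matrix (Fin m) (Fin m) ℂ) :
    ((βs A)ᴴ * Jmap f D hD.1 (βs A)).trace ≤ (Aᴴ * Jmap f (β D) hβD.1 A).trace := by
  rw [trace_Jmap, trace_Jmap, Complex.real_le_real]
  have key := diagonal_transformer hfpos hmono
    (eigenCoordLin hD.1 ∘ₗ βs ∘ₗ ofEigenCoord hβD.1)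
    (fun p => hD.1.eigenvalues p.1) (fun p => hD.1.eigenvalues p.2)
    (fun p => hβD.1.eigenvalues p.1) (fun p => hβD.1.eigenvalues p.2)
    (fun p => hD.eigenvalues_pos _) (fun p => hD.eigenvalues_pos _)
    (fun p => hβD.eigenvalues_pos _) (fun p => hβD.eigenvalues_pos _)
    (fun x => by
      have h := schwarz_left β hcp htp D hD.posSemidef (ofEigenCoord hβD.1 x) _ (hβs _)
      rw [trace_eq_of_eigenCoord hD.1 _ _ _ (eigenCoord_mul_left hD.1 _),
        trace_eq_of_eigenCoord hβD.1 _ _ _ (eigenCoord_mul_left hβD.1 _),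
        Complex.ofReal_re, Complex.ofReal_re, eigenCoord_ofEigenCoord] at h
      exact h)
    (fun x => by
      have h := schwarz_right β hcp htp D hD.posSemidef (ofEigenCoord hβD.1 x) _ (hβs _)
      rw [trace_eq_of_eigenCoord hD.1 _ _ _ (eigenCoord_mul_right hD.1 _),
        trace_eq_of_eigenCoord hβD.1 _ _ _ (eigenCoord_mul_right hβD.1 _),
        Complex.ofReal_re, Complex.ofReal_re, eigenCoord_ofEigenCoord] at h
      exact h)
    (eigenCoord hβD.1 A)
  rw [LinearMap.comp_apply, LinearMap.comp_apply, ofEigenCoord_eigenCoord] at key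
  exact key

/-- for operator monotone `f` and a completely positive trace preserving
map `β` with `β(D)` positive definite, `β J_D^f β* ≤ J_{β(D)}^f` on `M_m` and equivalently
`β* (J_{β(D)}^f)⁻¹ β ≤ (J_D^f)⁻¹` on `M_n` (quadratic-form inequalities with respect to
the Hilbert–Schmidt inner product; `βs` is the Hilbert–Schmidt adjoint of `β` and
`KD, KβD` are the inverses of `J_D^f` and `J_{β(D)}^f`). -/
theorem stmt12 {n m : ℕ} (f : ℝ → ℝ) (hfpos : ∀ x > 0, 0 < f x)
    (hmono : OperatorMonotoneOn f)
    (β : Matrix (Fin n) (Fin n) ℂ →ₗ[ℂ] Matrix (Fin m) (Fin m) ℂ)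
    (hcp : IsCompletelyPositive β) (htp : ∀ X, (β X).trace = X.trace)
    (βs : Matrix (Fin m) (Fin m) ℂ →ₗ[ℂ] Matrix (Fin n) (Fin n) ℂ)
    (hβs : ∀ (A : Matrix (Fin m) (Fin m) ℂ) (X : Matrix (Fin n) (Fin n) ℂ),
      (Aᴴ * β X).trace = ((βs A)ᴴ * X).trace)
    (D : Matrix (Fin n) (Fin n) ℂ) (hD : D.PosDef) (hβD : (β D).PosDef)
    (KD : Matrix (Fin n) (Fin n) ℂ → Matrix (Fin n) (Fin n) ℂ)
    (hKD : ∀ X, Jmap f D hD.1 (KD X) = X ∧ KD (Jmap f D hD.1 X) = X)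
    (KβD : Matrix (Fin m) (Fin m) ℂ → Matrix (Fin m) (Fin m) ℂ)
    (hKβD : ∀ X, Jmap f (β D) hβD.1 (KβD X) = X ∧ KβD (Jmap f (β D) hβD.1 X) = X) :
    (∀ A : Matrix (Fin m) (Fin m) ℂ,
      (Aᴴ * β (Jmap f D hD.1 (βs A))).trace ≤ (Aᴴ * Jmap f (β D) hβD.1 A).trace)
    ∧ (∀ X : Matrix (Fin n) (Fin n) ℂ,
      (Xᴴ * βs (KβD (β X))).trace ≤ (Xᴴ * KD X).trace) := by
  have hfirst := Jmap_le f hfpos hmono β hcp htp βs hβs D hD hβD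
  refine ⟨fun A => ?_, fun X => ?_⟩
  · rw [hβs]
    exact hfirst A
  · -- With `A = (J_{β(D)})⁻¹ β X` and `Y = J_D⁻¹ X`, expand `⟨Y - β* A, J_D (Y - β* A)⟩ ≥ 0`.
    set A := KβD (β X) with hA
    set Y := KD X with hY
    have hJA : Jmap f (β D) hβD.1 A = β X := (hKβD _).1
    have hJY : Jmap f D hD.1 Y = X := (hKD _).1
    have hpos : 0 ≤ ((Y - βs A)ᴴ * Jmap f D hD.1 (Y - βs A)).trace := by
      rw [trace_Jmap]
      have : 0 ≤ ∑ p : Fin n × Fin n,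
          hD.1.eigenvalues p.2 * f (hD.1.eigenvalues p.1 / hD.1.eigenvalues p.2)
            * Complex.normSq (eigenCoord hD.1 (Y - βs A) p) :=
        Finset.sum_nonneg fun p _ => mul_nonneg (mul_nonneg (hD.eigenvalues_pos _).le
          (hfpos _ (div_pos (hD.eigenvalues_pos _) (hD.eigenvalues_pos _))).le)
          (Complex.normSq_nonneg _)
      exact_mod_cast this
    obtain ⟨y, hy⟩ : ∃ y : ℝ, (Yᴴ * X).trace = y := ⟨_, by rw [← hJY]; exact trace_Jmap _ f Y⟩
    obtain ⟨a, ha⟩ : ∃ a : ℝ, (Aᴴ * β X).trace = a := ⟨_, by rw [← hJA]; exact trace_Jmap _ f A⟩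
    have hBX : ((βs A)ᴴ * X).trace = a := by rw [← hβs, ha]
    have hXB : (Xᴴ * βs A).trace = a := by
      rw [← conjTranspose_conjTranspose (Xᴴ * βs A), trace_conjTranspose, conjTranspose_mul,
        conjTranspose_conjTranspose, hBX]
      simp
    have hXY : (Xᴴ * Y).trace = y := by
      rw [← conjTranspose_conjTranspose (Xᴴ * Y), trace_conjTranspose, conjTranspose_mul,
        conjTranspose_conjTranspose, hy]
      simp
    have hYB : (Yᴴ * Jmap f D hD.1 (βs A)).trace = a := by
      rw [trace_Jmap_conj, hJY, hBX]
      simp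
    have h1 := hfirst A
    rw [hJA, ha] at h1
    rw [Jmap_sub, hJY, conjTranspose_sub, Matrix.sub_mul, Matrix.mul_sub, Matrix.mul_sub,
      trace_sub, trace_sub, trace_sub, hy, hBX, hYB] at hpos
    rw [hXB, hXY]
    have h2 := add_nonneg hpos (sub_nonneg.2 h1)
    rw [← sub_nonneg]
    convert h2 using 1
    ring
end
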